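/- For every nonzero triple (c₁,c₂,c₃) ∈ ℝ³, the second-variation form of the fundamental Scherk surface satisfies Q(c₁φ¹ + c₂φ² + c₃φ³) < 0. Consequently φ¹, φ², φ³ span a 3-dimensional subspace of the space of smooth functions on Ω₀ with bounded partial derivatives of order ≤ 2 on which Q is negative definite, so the modified index of the fundamental Scherk surface is at least 3. -/

import Mathlib

noncomputable section
open MeasureTheory Real

/-- Dot product on `ℝ³ = ℝ × ℝ × ℝ`. -/
def dot3 (a b : ℝ × ℝ × ℝ) : ℝ := a.1 * b.1 + a.2.1 * b.2.1 + a.2.2 * b.2.2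

/-- Cross product on `ℝ³ = ℝ × ℝ × ℝ`. -/
def cross3 (a b : ℝ × ℝ × ℝ) : ℝ × ℝ × ℝ :=
  (a.2.1 * b.2.2 - a.2.2 * b.2.1, a.2.2 * b.1 - a.1 * b.2.2, a.1 * b.2.1 - a.2.1 * b.1)

/-- Euclidean norm on `ℝ³ = ℝ × ℝ × ℝ`. -/
def norm3 (a : ℝ × ℝ × ℝ) : ℝ := Real.sqrt (dot3 a a)

/-- Partial derivative in the first (`u`) variable. -/
def pdU {E : Type*} [NormedAddCommGroup E] [NormedSpace ℝ E] (f : ℝ × ℝ → E) (p : ℝ × ℝ) : E :=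
  deriv (fun x => f (x, p.2)) p.1

/-- Partial derivative in the second (`v`) variable. -/
def pdV {E : Type*} [NormedAddCommGroup E] [NormedSpace ℝ E] (f : ℝ × ℝ → E) (p : ℝ × ℝ) : E :=
  deriv (fun y => f (p.1, y)) p.2

/-- The fundamental domain `Ω₀ = (-1,1) × (-1,1)`. -/
def Ω₀ : Set (ℝ × ℝ) := Set.Ioo (-1 : ℝ) 1 ×ˢ Set.Ioo (-1 : ℝ) 1

/-- The fundamental Scherk parametrization. -/
def scherk (p : ℝ × ℝ) : ℝ × ℝ × ℝ :=
  (arctan (2 * p.1 / (p.1 ^ 2 + p.2 ^ 2 - 1)),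
   arctan (-2 * p.2 / (p.1 ^ 2 + p.2 ^ 2 - 1)),
   (1 / 2) * Real.log (((p.1 ^ 2 - p.2 ^ 2 + 1) ^ 2 + 4 * p.1 ^ 2 * p.2 ^ 2) /
     ((p.1 ^ 2 - p.2 ^ 2 - 1) ^ 2 + 4 * p.1 ^ 2 * p.2 ^ 2)))

def σu : ℝ × ℝ → ℝ × ℝ × ℝ := pdU scherk
def σv : ℝ × ℝ → ℝ × ℝ × ℝ := pdV scherk
def σuu : ℝ × ℝ → ℝ × ℝ × ℝ := pdU σu
def σuv : ℝ × ℝ → ℝ × ℝ × ℝ := pdV σu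
def σvv : ℝ × ℝ → ℝ × ℝ × ℝ := pdV σv

/-- First fundamental form. -/
def g11 (p : ℝ × ℝ) : ℝ := dot3 (σu p) (σu p)
def g12 (p : ℝ × ℝ) : ℝ := dot3 (σu p) (σv p)
def g22 (p : ℝ × ℝ) : ℝ := dot3 (σv p) (σv p)

def detg (p : ℝ × ℝ) : ℝ := g11 p * g22 p - g12 p ^ 2

/-- Components of the inverse metric `(gⁱʲ)`. -/
def ginv11 (p : ℝ × ℝ) : ℝ := g22 p / detg p
def ginv12 (p : ℝ × ℝ) : ℝ := -g12 p / detg p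
def ginv22 (p : ℝ × ℝ) : ℝ := g11 p / detg p

/-- Unit normal `N = (σ_u × σ_v)/‖σ_u × σ_v‖`. -/
def NS (p : ℝ × ℝ) : ℝ × ℝ × ℝ :=
  (norm3 (cross3 (σu p) (σv p)))⁻¹ • cross3 (σu p) (σv p)

/-- Second fundamental form. -/
def h11 (p : ℝ × ℝ) : ℝ := dot3 (σuu p) (NS p)
def h12 (p : ℝ × ℝ) : ℝ := dot3 (σuv p) (NS p)
def h22 (p : ℝ × ℝ) : ℝ := dot3 (σvv p) (NS p)

/-- Gaussian curvature. -/
def κ (p : ℝ × ℝ) : ℝ := (h11 p * h22 p - h12 p ^ 2) / detg p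

/-- The second-variation quadratic form of the fundamental Scherk surface. -/
def Q (φ : ℝ × ℝ → ℝ) : ℝ :=
  ∫ p in Ω₀,
    (ginv11 p * pdU φ p ^ 2 + 2 * ginv12 p * pdU φ p * pdV φ p + ginv22 p * pdV φ p ^ 2
      + 2 * κ p * φ p ^ 2) * Real.sqrt (detg p)

/-- The polarized second-variation bilinear form. -/
def B (φ ψ : ℝ × ℝ → ℝ) : ℝ :=
  ∫ p in Ω₀,
    (ginv11 p * pdU φ p * pdU ψ p + ginv12 p * pdU φ p * pdV ψ p
      + ginv12 p * pdV φ p * pdU ψ p + ginv22 p * pdV φ p * pdV ψ p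
      + 2 * κ p * φ p * ψ p) * Real.sqrt (detg p)

/-- The test functions `φ¹, φ², φ³`. -/
def Φ : Fin 3 → (ℝ × ℝ → ℝ) :=
  ![fun p => (p.1 * p.2) ^ 2 + 2,
    fun p => p.1 - p.1 ^ 5 / 4,
    fun p => p.2 - p.2 ^ 5 / 4]

/-- Membership in `F(Ω₀)`: smooth on `Ω₀` with all partial derivatives of order `≤ 2`
bounded on `Ω₀`. -/
def memF (f : ℝ × ℝ → ℝ) : Prop :=
  ContDiffOn ℝ (⊤ : ℕ∞) f Ω₀ ∧
    ∀ i : ℕ, i ≤ 2 → ∃ C : ℝ, ∀ p ∈ Ω₀, ‖iteratedFDerivWithin ℝ i f Ω₀ p‖ ≤ C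

/-- The modified index `ind_b` of the fundamental Scherk surface: the supremum of the
dimensions of finite-dimensional subspaces of `F(Ω₀)` on which the second-variation
form `Q` is negative definite. -/
def indbScherk : ℕ∞ :=
  sSup {d : ℕ∞ | ∃ V : Submodule ℝ (ℝ × ℝ → ℝ), FiniteDimensional ℝ V ∧
    (∀ f ∈ V, memF f) ∧ (∀ f ∈ V, f ≠ 0 → Q f < 0) ∧ d = (Module.finrank ℝ V : ℕ∞)}

open scoped Topology

/-!
The parametrization `σ` is conformal, and its Gauss map is the inverse stereographic projection
`n : ℝ² → S²`. Differentiating `σ_i · n = 0` gives `h_{ij} = -σ_i · ∂_j n`, so by the Binet-Cauchy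
identity `det h = (σ_u × σ_v) · (∂_u n × ∂_v n)`; hence `Q φ` is the flat integral of
`|∇φ|² - 8 φ² / (1 + u² + v²)²`. The reflections `u ↦ -u` and `u ↔ v` preserve this form, make the
three test functions mutually orthogonal, and interchange `φ²` and `φ³`, so it remains to prove
`Q φ¹ < 0` and `Q φ² < 0`. The integrand of `Q φ¹` is negative pointwise; for `φ²` the weight
`1 / (1 + s)²` is replaced by a cubic polynomial minorant, which leaves only polynomial moments.
-/

section Vector

theorem cross3_smul_smul (a b : ℝ) (x y : ℝ × ℝ × ℝ) :
    cross3 (a • x) (b • y) = (a * b) • cross3 x y := by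
  simp only [cross3, Prod.smul_fst, Prod.smul_snd, Prod.smul_mk, smul_eq_mul]
  ring_nf

theorem dot3_smul_left (a : ℝ) (x y : ℝ × ℝ × ℝ) : dot3 (a • x) y = a * dot3 x y := by
  simp only [dot3, Prod.smul_fst, Prod.smul_snd, smul_eq_mul]
  ring

theorem dot3_smul_right (a : ℝ) (x y : ℝ × ℝ × ℝ) : dot3 x (a • y) = a * dot3 x y := by
  simp only [dot3, Prod.smul_fst, Prod.smul_snd, smul_eq_mul]
  ring

theorem dot3_cross3_cross3 (a b c d : ℝ × ℝ × ℝ) :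
    dot3 (cross3 a b) (cross3 c d) = dot3 a c * dot3 b d - dot3 a d * dot3 b c := by
  simp only [dot3, cross3]
  ring

theorem dot3_self_cross3 (a b : ℝ × ℝ × ℝ) : dot3 a (cross3 a b) = 0 := by
  simp only [dot3, cross3]
  ring

theorem dot3_cross3_self (a b : ℝ × ℝ × ℝ) : dot3 b (cross3 a b) = 0 := by
  simp only [dot3, cross3]
  ring

theorem norm3_smul_of_dot3_self_eq_one {a : ℝ} (ha : 0 ≤ a) {n : ℝ × ℝ × ℝ} (hn : dot3 n n = 1) :
    norm3 (a • n) = a := by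
  rw [norm3, dot3_smul_left, dot3_smul_right, hn, mul_one, Real.sqrt_mul_self ha]

theorem hasDerivAt_coords {x : ℝ → ℝ × ℝ × ℝ} {x' : ℝ × ℝ × ℝ} {t : ℝ} (hx : HasDerivAt x x' t) :
    HasDerivAt (fun s => (x s).1) x'.1 t ∧ HasDerivAt (fun s => (x s).2.1) x'.2.1 t ∧
      HasDerivAt (fun s => (x s).2.2) x'.2.2 t := by
  refine ⟨?_, ?_, ?_⟩
  · simpa using hx.hasFDerivAt.fst.hasDerivAt
  · simpa using hx.hasFDerivAt.snd.fst.hasDerivAt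
  · simpa using hx.hasFDerivAt.snd.snd.hasDerivAt

theorem hasDerivAt_dot3 {x y : ℝ → ℝ × ℝ × ℝ} {x' y' : ℝ × ℝ × ℝ} {t : ℝ}
    (hx : HasDerivAt x x' t) (hy : HasDerivAt y y' t) :
    HasDerivAt (fun s => dot3 (x s) (y s)) (dot3 x' (y t) + dot3 (x t) y') t := by
  obtain ⟨hx₁, hx₂, hx₃⟩ := hasDerivAt_coords hx
  obtain ⟨hy₁, hy₂, hy₃⟩ := hasDerivAt_coords hy
  refine (((hx₁.fun_mul hy₁).fun_add (hx₂.fun_mul hy₂)).fun_add (hx₃.fun_mul hy₃)).congr_deriv ?_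
  simp only [dot3]
  ring

theorem dot3_deriv_left_eq_neg {x y : ℝ → ℝ × ℝ × ℝ} {t : ℝ} (hx : DifferentiableAt ℝ x t)
    (hy : DifferentiableAt ℝ y t) (horth : ∀ᶠ s in 𝓝 t, dot3 (x s) (y s) = 0) :
    dot3 (deriv x t) (y t) = -dot3 (x t) (deriv y t) := by
  have hzero := (hasDerivAt_const t (0 : ℝ)).congr_of_eventuallyEq horth
  exact eq_neg_of_add_eq_zero_left
    ((hasDerivAt_dot3 hx.hasDerivAt hy.hasDerivAt).unique hzero)

theorem dot3_pdU_left_eq_neg {x y : ℝ × ℝ → ℝ × ℝ × ℝ} {p : ℝ × ℝ} (hx : DifferentiableAt ℝ x p)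
    (hy : DifferentiableAt ℝ y p) (horth : ∀ᶠ q in 𝓝 p, dot3 (x q) (y q) = 0) :
    dot3 (pdU x p) (y p) = -dot3 (x p) (pdU y p) := by
  have hslice : DifferentiableAt ℝ (fun t : ℝ => (t, p.2)) p.1 := by fun_prop
  exact dot3_deriv_left_eq_neg (hx.comp (f := fun t : ℝ => (t, p.2)) p.1 hslice)
    (hy.comp (f := fun t : ℝ => (t, p.2)) p.1 hslice) (hslice.continuousAt.eventually horth)

theorem dot3_pdV_left_eq_neg {x y : ℝ × ℝ → ℝ × ℝ × ℝ} {p : ℝ × ℝ} (hx : DifferentiableAt ℝ x p)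
    (hy : DifferentiableAt ℝ y p) (horth : ∀ᶠ q in 𝓝 p, dot3 (x q) (y q) = 0) :
    dot3 (pdV x p) (y p) = -dot3 (x p) (pdV y p) := by
  have hslice : DifferentiableAt ℝ (fun t : ℝ => (p.1, t)) p.2 := by fun_prop
  exact dot3_deriv_left_eq_neg (hx.comp (f := fun t : ℝ => (p.1, t)) p.2 hslice)
    (hy.comp (f := fun t : ℝ => (p.1, t)) p.2 hslice) (hslice.continuousAt.eventually horth)

end Vector

section Parametrization

/-- `|z² + 1|²` for `z = u + iv`. -/
def sqAdd (p : ℝ × ℝ) : ℝ := (p.1 ^ 2 - p.2 ^ 2 + 1) ^ 2 + 4 * p.1 ^ 2 * p.2 ^ 2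

/-- `|z² - 1|²` for `z = u + iv`. -/
def sqSub (p : ℝ × ℝ) : ℝ := (p.1 ^ 2 - p.2 ^ 2 - 1) ^ 2 + 4 * p.1 ^ 2 * p.2 ^ 2

theorem sqAdd_eq (p : ℝ × ℝ) : sqAdd p = (p.1 ^ 2 + p.2 ^ 2 - 1) ^ 2 + (2 * p.1) ^ 2 := by
  unfold sqAdd; ring

theorem sqSub_eq (p : ℝ × ℝ) : sqSub p = (p.1 ^ 2 + p.2 ^ 2 - 1) ^ 2 + (2 * p.2) ^ 2 := by
  unfold sqSub; ring

theorem sqAdd_pos {p : ℝ × ℝ} (hp : p.1 ^ 2 + p.2 ^ 2 - 1 ≠ 0) : 0 < sqAdd p := by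
  rw [sqAdd_eq]; positivity

theorem sqSub_pos {p : ℝ × ℝ} (hp : p.1 ^ 2 + p.2 ^ 2 - 1 ≠ 0) : 0 < sqSub p := by
  rw [sqSub_eq]; positivity

theorem sqAdd_swap (p : ℝ × ℝ) : sqAdd p.swap = sqSub p := by
  simp only [sqAdd, sqSub, Prod.fst_swap, Prod.snd_swap]; ring

theorem sqSub_swap (p : ℝ × ℝ) : sqSub p.swap = sqAdd p := by
  rw [← sqAdd_swap, Prod.swap_swap]

/-- Closed form of `σ_u` off the unit circle. -/
def scherkU (p : ℝ × ℝ) : ℝ × ℝ × ℝ :=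
  (-2 * (1 + p.1 ^ 2 - p.2 ^ 2) / sqAdd p, 4 * p.1 * p.2 / sqSub p,
    2 * p.1 * (p.1 ^ 2 + p.2 ^ 2 + 1) / sqAdd p - 2 * p.1 * (p.1 ^ 2 + p.2 ^ 2 - 1) / sqSub p)

/-- Closed form of `σ_v` off the unit circle. -/
def scherkV (p : ℝ × ℝ) : ℝ × ℝ × ℝ :=
  (-(4 * p.1 * p.2 / sqAdd p), 2 * (1 + p.2 ^ 2 - p.1 ^ 2) / sqSub p,
    2 * p.2 * (p.1 ^ 2 + p.2 ^ 2 - 1) / sqAdd p - 2 * p.2 * (p.1 ^ 2 + p.2 ^ 2 + 1) / sqSub p)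

theorem hasDerivAt_arctan_div {f g : ℝ → ℝ} {f' g' x : ℝ} (hf : HasDerivAt f f' x)
    (hg : HasDerivAt g g' x) (hx : g x ≠ 0) :
    HasDerivAt (fun t => arctan (f t / g t)) ((f' * g x - f x * g') / (g x ^ 2 + f x ^ 2)) x := by
  refine (hf.fun_div hg hx).arctan.congr_deriv ?_
  have : 0 < g x ^ 2 + f x ^ 2 := by positivity
  field_simp

theorem hasDerivAt_log_div {f g : ℝ → ℝ} {f' g' x : ℝ} (hf : HasDerivAt f f' x)
    (hg : HasDerivAt g g' x) (hfx : f x ≠ 0) (hgx : g x ≠ 0) :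
    HasDerivAt (fun t => Real.log (f t / g t)) (f' / f x - g' / g x) x := by
  refine ((hf.fun_div hg hgx).log (div_ne_zero hfx hgx)).congr_deriv ?_
  field_simp

theorem hasDerivAt_sqAdd_fst (u v : ℝ) :
    HasDerivAt (fun x => sqAdd (x, v)) (4 * u * (u ^ 2 + v ^ 2 + 1)) u := by
  refine (((((hasDerivAt_pow 2 u).sub_const (v ^ 2)).add_const 1).fun_pow 2).fun_add
    (((hasDerivAt_pow 2 u).const_mul 4).mul_const (v ^ 2))).congr_deriv ?_
  norm_num
  ring

theorem hasDerivAt_sqSub_fst (u v : ℝ) :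
    HasDerivAt (fun x => sqSub (x, v)) (4 * u * (u ^ 2 + v ^ 2 - 1)) u := by
  refine (((((hasDerivAt_pow 2 u).sub_const (v ^ 2)).sub_const 1).fun_pow 2).fun_add
    (((hasDerivAt_pow 2 u).const_mul 4).mul_const (v ^ 2))).congr_deriv ?_
  norm_num
  ring

theorem hasDerivAt_scherk_fst {u v : ℝ} (hp : u ^ 2 + v ^ 2 - 1 ≠ 0) :
    HasDerivAt (fun x => scherk (x, v)) (scherkU (u, v)) u := by
  have hcircle : HasDerivAt (fun x : ℝ => x ^ 2 + v ^ 2 - 1) (2 * u) u := by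
    simpa using ((hasDerivAt_pow 2 u).add_const (v ^ 2)).sub_const 1
  have hx : HasDerivAt (fun x => arctan (2 * x / (x ^ 2 + v ^ 2 - 1))) (scherkU (u, v)).1 u := by
    refine (hasDerivAt_arctan_div ((hasDerivAt_id' u).const_mul 2) hcircle hp).congr_deriv ?_
    simp only [scherkU, sqAdd_eq]
    ring
  have hy : HasDerivAt (fun x => arctan (-2 * v / (x ^ 2 + v ^ 2 - 1))) (scherkU (u, v)).2.1 u := by
    refine (hasDerivAt_arctan_div (hasDerivAt_const u (-2 * v)) hcircle hp).congr_deriv ?_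
    simp only [scherkU, sqSub_eq]
    ring
  have hz : HasDerivAt (fun x => (1 / 2) * Real.log (sqAdd (x, v) / sqSub (x, v)))
      (scherkU (u, v)).2.2 u := by
    refine ((hasDerivAt_log_div (hasDerivAt_sqAdd_fst u v) (hasDerivAt_sqSub_fst u v)
      (sqAdd_pos hp).ne' (sqSub_pos hp).ne').const_mul (1 / 2)).congr_deriv ?_
    simp only [scherkU]
    ring
  exact hx.prodMk (hy.prodMk hz)

theorem scherk_swap (p : ℝ × ℝ) :
    scherk p.swap = (-(scherk p).2.1, -(scherk p).1, -(scherk p).2.2) := by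
  have hz : sqAdd p.swap / sqSub p.swap = (sqAdd p / sqSub p)⁻¹ := by
    rw [sqAdd_swap, sqSub_swap, inv_div]
  have hlog := congrArg Real.log hz
  rw [Real.log_inv] at hlog
  simp only [sqAdd, sqSub, Prod.fst_swap, Prod.snd_swap] at hlog
  simp only [scherk, Prod.fst_swap, Prod.snd_swap, hlog, ← arctan_neg, add_comm (p.2 ^ 2)]
  ring_nf

theorem hasDerivAt_scherk_snd {u v : ℝ} (hp : u ^ 2 + v ^ 2 - 1 ≠ 0) :
    HasDerivAt (fun y => scherk (u, y)) (scherkV (u, v)) v := by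
  obtain ⟨hx, hy, hz⟩ :=
    hasDerivAt_coords (hasDerivAt_scherk_fst (u := v) (v := u) (by rwa [add_comm]))
  have hswap : (fun y => scherk (u, y)) =
      fun y => (-(scherk (y, u)).2.1, -(scherk (y, u)).1, -(scherk (y, u)).2.2) :=
    funext fun y => scherk_swap (y, u)
  rw [hswap]
  refine (hy.fun_neg.prodMk (hx.fun_neg.prodMk hz.fun_neg)).congr_deriv ?_
  simp only [scherkU, scherkV, show (v, u) = Prod.swap (u, v) from rfl, sqAdd_swap, sqSub_swap]
  ring_nf

theorem σu_eq {p : ℝ × ℝ} (hp : p.1 ^ 2 + p.2 ^ 2 - 1 ≠ 0) : σu p = scherkU p :=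
  (hasDerivAt_scherk_fst hp).deriv

theorem σv_eq {p : ℝ × ℝ} (hp : p.1 ^ 2 + p.2 ^ 2 - 1 ≠ 0) : σv p = scherkV p :=
  (hasDerivAt_scherk_snd hp).deriv

theorem eventually_off_circle {p : ℝ × ℝ} (hp : p.1 ^ 2 + p.2 ^ 2 - 1 ≠ 0) :
    ∀ᶠ q : ℝ × ℝ in 𝓝 p, q.1 ^ 2 + q.2 ^ 2 - 1 ≠ 0 :=
  (by fun_prop : Continuous fun q : ℝ × ℝ => q.1 ^ 2 + q.2 ^ 2 - 1).continuousAt.eventually_ne hp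

theorem differentiableAt_σu {p : ℝ × ℝ} (hp : p.1 ^ 2 + p.2 ^ 2 - 1 ≠ 0) :
    DifferentiableAt ℝ σu p := by
  have hA := (sqAdd_pos hp).ne'
  have hC := (sqSub_pos hp).ne'
  have hU : DifferentiableAt ℝ scherkU p := by
    unfold scherkU sqAdd sqSub at *
    fun_prop (disch := assumption)
  exact hU.congr_of_eventuallyEq ((eventually_off_circle hp).mono fun q => σu_eq)

theorem differentiableAt_σv {p : ℝ × ℝ} (hp : p.1 ^ 2 + p.2 ^ 2 - 1 ≠ 0) :
    DifferentiableAt ℝ σv p := by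
  have hA := (sqAdd_pos hp).ne'
  have hC := (sqSub_pos hp).ne'
  have hV : DifferentiableAt ℝ scherkV p := by
    unfold scherkV sqAdd sqSub at *
    fun_prop (disch := assumption)
  exact hV.congr_of_eventuallyEq ((eventually_off_circle hp).mono fun q => σv_eq)

end Parametrization

section Geometry

/-- The conformal factor `E` of the first fundamental form `E (du² + dv²)`. -/
def conf (p : ℝ × ℝ) : ℝ := 4 * (1 + p.1 ^ 2 + p.2 ^ 2) ^ 2 / (sqAdd p * sqSub p)

theorem conf_pos {p : ℝ × ℝ} (hp : p.1 ^ 2 + p.2 ^ 2 - 1 ≠ 0) : 0 < conf p := by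
  have := sqAdd_pos hp
  have := sqSub_pos hp
  unfold conf
  positivity

theorem g11_eq {p : ℝ × ℝ} (hp : p.1 ^ 2 + p.2 ^ 2 - 1 ≠ 0) : g11 p = conf p := by
  have hA := (sqAdd_pos hp).ne'
  have hC := (sqSub_pos hp).ne'
  simp only [g11, σu_eq hp, scherkU, dot3, conf]
  field_simp
  simp only [sqAdd, sqSub]
  ring

theorem g22_eq {p : ℝ × ℝ} (hp : p.1 ^ 2 + p.2 ^ 2 - 1 ≠ 0) : g22 p = conf p := by
  have hA := (sqAdd_pos hp).ne'
  have hC := (sqSub_pos hp).ne'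
  simp only [g22, σv_eq hp, scherkV, dot3, conf]
  field_simp
  simp only [sqAdd, sqSub]
  ring

theorem g12_eq {p : ℝ × ℝ} (hp : p.1 ^ 2 + p.2 ^ 2 - 1 ≠ 0) : g12 p = 0 := by
  have hA := (sqAdd_pos hp).ne'
  have hC := (sqSub_pos hp).ne'
  simp only [g12, σu_eq hp, σv_eq hp, scherkU, scherkV, dot3]
  field_simp
  simp only [sqAdd, sqSub]
  ring

theorem detg_eq {p : ℝ × ℝ} (hp : p.1 ^ 2 + p.2 ^ 2 - 1 ≠ 0) : detg p = conf p ^ 2 := by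
  rw [detg, g11_eq hp, g22_eq hp, g12_eq hp]
  ring

/-- The inverse stereographic projection `ℝ² → S²`, which is the Gauss map of the Scherk surface. -/
def invStereo (p : ℝ × ℝ) : ℝ × ℝ × ℝ :=
  (-2 * p.1 / (1 + p.1 ^ 2 + p.2 ^ 2), -2 * p.2 / (1 + p.1 ^ 2 + p.2 ^ 2),
    (p.1 ^ 2 + p.2 ^ 2 - 1) / (1 + p.1 ^ 2 + p.2 ^ 2))

theorem dot3_invStereo_self (p : ℝ × ℝ) : dot3 (invStereo p) (invStereo p) = 1 := by
  have : 1 + p.1 ^ 2 + p.2 ^ 2 ≠ 0 := by positivity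
  simp only [dot3, invStereo]
  field_simp
  ring

theorem differentiable_invStereo : Differentiable ℝ invStereo := by
  have : ∀ p : ℝ × ℝ, 1 + p.1 ^ 2 + p.2 ^ 2 ≠ 0 := fun p => by positivity
  unfold invStereo
  fun_prop (disch := assumption)

theorem pdU_invStereo (p : ℝ × ℝ) : pdU invStereo p = (2 / (1 + p.1 ^ 2 + p.2 ^ 2) ^ 2) •
    (-(1 - p.1 ^ 2 + p.2 ^ 2), 2 * p.1 * p.2, 2 * p.1) := by
  obtain ⟨u, v⟩ := p
  have hs : 1 + u ^ 2 + v ^ 2 ≠ 0 := by positivity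
  have hden := ((hasDerivAt_pow 2 u).const_add 1).add_const (v ^ 2)
  have hx := ((hasDerivAt_id' u).const_mul (-2)).fun_div hden hs
  have hy := (hasDerivAt_const u (-2 * v)).fun_div hden hs
  have hz := (((hasDerivAt_pow 2 u).add_const (v ^ 2)).sub_const 1).fun_div hden hs
  refine ((hx.prodMk (hy.prodMk hz)).congr_deriv ?_).deriv
  simp only [Prod.smul_mk, smul_eq_mul, Nat.cast_ofNat, Prod.mk.injEq]
  refine ⟨?_, ?_, ?_⟩ <;> field_simp <;> ring

theorem pdV_invStereo (p : ℝ × ℝ) : pdV invStereo p = (2 / (1 + p.1 ^ 2 + p.2 ^ 2) ^ 2) •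
    (2 * p.1 * p.2, -(1 + p.1 ^ 2 - p.2 ^ 2), 2 * p.2) := by
  obtain ⟨u, v⟩ := p
  have hs : 1 + u ^ 2 + v ^ 2 ≠ 0 := by positivity
  have hden := (hasDerivAt_pow 2 v).const_add (1 + u ^ 2)
  have hx := (hasDerivAt_const v (-2 * u)).fun_div hden hs
  have hy := ((hasDerivAt_id' v).const_mul (-2)).fun_div hden hs
  have hz := (((hasDerivAt_pow 2 v).const_add (u ^ 2)).sub_const 1).fun_div hden hs
  refine ((hx.prodMk (hy.prodMk hz)).congr_deriv ?_).deriv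
  simp only [Prod.smul_mk, smul_eq_mul, Nat.cast_ofNat, Prod.mk.injEq]
  refine ⟨?_, ?_, ?_⟩ <;> field_simp <;> ring

-- The sign reflects that stereographic projection from the north pole reverses orientation.
theorem cross3_pdU_pdV_invStereo (p : ℝ × ℝ) : cross3 (pdU invStereo p) (pdV invStereo p) =
    (-4 / (1 + p.1 ^ 2 + p.2 ^ 2) ^ 2) • invStereo p := by
  have : 1 + p.1 ^ 2 + p.2 ^ 2 ≠ 0 := by positivity
  simp only [pdU_invStereo, pdV_invStereo, cross3_smul_smul]
  simp only [cross3, invStereo, Prod.smul_mk, smul_eq_mul, Prod.mk.injEq]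
  refine ⟨?_, ?_, ?_⟩ <;> field_simp <;> ring

theorem cross3_σu_σv {p : ℝ × ℝ} (hp : p.1 ^ 2 + p.2 ^ 2 - 1 ≠ 0) :
    cross3 (σu p) (σv p) = conf p • invStereo p := by
  have hA := (sqAdd_pos hp).ne'
  have hC := (sqSub_pos hp).ne'
  have : 1 + p.1 ^ 2 + p.2 ^ 2 ≠ 0 := by positivity
  simp only [cross3, σu_eq hp, σv_eq hp, scherkU, scherkV, conf, invStereo, Prod.smul_mk,
    smul_eq_mul, Prod.mk.injEq]
  refine ⟨?_, ?_, ?_⟩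
  · field_simp
    simp only [sqAdd, sqSub]
    ring
  · field_simp
    simp only [sqAdd, sqSub]
    ring
  · field_simp
    ring

theorem NS_eq {p : ℝ × ℝ} (hp : p.1 ^ 2 + p.2 ^ 2 - 1 ≠ 0) : NS p = invStereo p := by
  have hE := conf_pos hp
  rw [NS, cross3_σu_σv hp, norm3_smul_of_dot3_self_eq_one hE.le (dot3_invStereo_self p),
    inv_smul_smul₀ hE.ne']

theorem dot3_σu_invStereo {p : ℝ × ℝ} (hp : p.1 ^ 2 + p.2 ^ 2 - 1 ≠ 0) :
    dot3 (σu p) (invStereo p) = 0 := by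
  rw [← NS_eq hp, NS, dot3_smul_right, dot3_self_cross3, mul_zero]

theorem dot3_σv_invStereo {p : ℝ × ℝ} (hp : p.1 ^ 2 + p.2 ^ 2 - 1 ≠ 0) :
    dot3 (σv p) (invStereo p) = 0 := by
  rw [← NS_eq hp, NS, dot3_smul_right, dot3_cross3_self, mul_zero]

theorem h11_eq {p : ℝ × ℝ} (hp : p.1 ^ 2 + p.2 ^ 2 - 1 ≠ 0) :
    h11 p = -dot3 (σu p) (pdU invStereo p) := by
  rw [h11, NS_eq hp]
  exact dot3_pdU_left_eq_neg (differentiableAt_σu hp) differentiable_invStereo.differentiableAt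
    ((eventually_off_circle hp).mono fun _ => dot3_σu_invStereo)

theorem h12_eq {p : ℝ × ℝ} (hp : p.1 ^ 2 + p.2 ^ 2 - 1 ≠ 0) :
    h12 p = -dot3 (σu p) (pdV invStereo p) := by
  rw [h12, NS_eq hp]
  exact dot3_pdV_left_eq_neg (differentiableAt_σu hp) differentiable_invStereo.differentiableAt
    ((eventually_off_circle hp).mono fun _ => dot3_σu_invStereo)

theorem h22_eq {p : ℝ × ℝ} (hp : p.1 ^ 2 + p.2 ^ 2 - 1 ≠ 0) :
    h22 p = -dot3 (σv p) (pdV invStereo p) := by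
  rw [h22, NS_eq hp]
  exact dot3_pdV_left_eq_neg (differentiableAt_σv hp) differentiable_invStereo.differentiableAt
    ((eventually_off_circle hp).mono fun _ => dot3_σv_invStereo)

theorem dot3_σv_pdU_invStereo {p : ℝ × ℝ} (hp : p.1 ^ 2 + p.2 ^ 2 - 1 ≠ 0) :
    dot3 (σv p) (pdU invStereo p) = dot3 (σu p) (pdV invStereo p) := by
  have hA := (sqAdd_pos hp).ne'
  have hC := (sqSub_pos hp).ne'
  rw [σu_eq hp, σv_eq hp, pdU_invStereo, pdV_invStereo, dot3_smul_right, dot3_smul_right]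
  congr 1
  simp only [dot3, scherkU, scherkV]
  field_simp
  simp only [sqAdd, sqSub]
  ring

theorem det_second_fundamental_form {p : ℝ × ℝ} (hp : p.1 ^ 2 + p.2 ^ 2 - 1 ≠ 0) :
    h11 p * h22 p - h12 p ^ 2 = -4 / (1 + p.1 ^ 2 + p.2 ^ 2) ^ 2 * conf p := by
  calc h11 p * h22 p - h12 p ^ 2
      = dot3 (σu p) (pdU invStereo p) * dot3 (σv p) (pdV invStereo p)
          - dot3 (σu p) (pdV invStereo p) * dot3 (σv p) (pdU invStereo p) := by
        rw [h11_eq hp, h12_eq hp, h22_eq hp, dot3_σv_pdU_invStereo hp]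
        ring
    _ = dot3 (cross3 (σu p) (σv p)) (cross3 (pdU invStereo p) (pdV invStereo p)) :=
        (dot3_cross3_cross3 _ _ _ _).symm
    _ = -4 / (1 + p.1 ^ 2 + p.2 ^ 2) ^ 2 * conf p := by
        rw [cross3_σu_σv hp, cross3_pdU_pdV_invStereo, dot3_smul_left, dot3_smul_right,
          dot3_invStereo_self]
        ring

theorem κ_eq {p : ℝ × ℝ} (hp : p.1 ^ 2 + p.2 ^ 2 - 1 ≠ 0) :
    κ p = -4 / ((1 + p.1 ^ 2 + p.2 ^ 2) ^ 2 * conf p) := by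
  have hE := (conf_pos hp).ne'
  rw [κ, det_second_fundamental_form hp, detg_eq hp]
  field_simp

end Geometry

section FlatForm

variable {φ ψ : ℝ × ℝ → ℝ}

theorem ae_off_circle : ∀ᵐ p : ℝ × ℝ, p.1 ^ 2 + p.2 ^ 2 - 1 ≠ 0 := by
  have hclosed : IsClosed {p : ℝ × ℝ | p.1 ^ 2 + p.2 ^ 2 - 1 = 0} :=
    isClosed_eq (by fun_prop) continuous_const
  have hnull : volume {p : ℝ × ℝ | p.1 ^ 2 + p.2 ^ 2 - 1 = 0} = 0 := by
    rw [Measure.volume_eq_prod, Measure.measure_prod_null hclosed.measurableSet]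
    refine .of_forall fun x => ?_
    refine ((Set.toFinite {√(1 - x ^ 2), -√(1 - x ^ 2)}).subset ?_).measure_zero _
    intro y (hy : x ^ 2 + y ^ 2 - 1 = 0)
    rw [show 1 - x ^ 2 = y ^ 2 by linarith, Real.sqrt_sq_eq_abs]
    rcases abs_choice y with h | h <;> simp [h]
  simpa only [ae_iff, not_not] using hnull

/-- The polarized integrand of the second-variation form in the conformal coordinates `(u, v)`: the
flat Dirichlet energy minus `φ ψ` times twice the pulled-back spherical area density
`|κ| √det g = 4 / (1 + u² + v²)²`. -/
def flatDensity (φ ψ : ℝ × ℝ → ℝ) (p : ℝ × ℝ) : ℝ :=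
  pdU φ p * pdU ψ p + pdV φ p * pdV ψ p - 8 * (φ p * ψ p) / (1 + p.1 ^ 2 + p.2 ^ 2) ^ 2

theorem B_eq (φ ψ : ℝ × ℝ → ℝ) : B φ ψ = ∫ p in Ω₀, flatDensity φ ψ p := by
  refine integral_congr_ae (ae_restrict_of_ae ?_)
  filter_upwards [ae_off_circle] with p hp
  have hE := conf_pos hp
  have hs : 1 + p.1 ^ 2 + p.2 ^ 2 ≠ 0 := by positivity
  rw [ginv11, ginv12, ginv22, κ_eq hp, detg_eq hp, g11_eq hp, g12_eq hp, g22_eq hp,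
    Real.sqrt_sq hE.le, flatDensity]
  field_simp
  ring

theorem Q_eq_B (φ : ℝ × ℝ → ℝ) : Q φ = B φ φ := by
  unfold Q B
  congr 1 with p
  ring

theorem Q_eq (φ : ℝ × ℝ → ℝ) : Q φ = ∫ p in Ω₀, flatDensity φ φ p := by
  rw [Q_eq_B, B_eq]

theorem Q_zero : Q 0 = 0 := by
  simp [Q_eq, flatDensity, pdU, pdV]

theorem B_comm (φ ψ : ℝ × ℝ → ℝ) : B φ ψ = B ψ φ := by
  simp only [B_eq, flatDensity, mul_comm]

theorem B_neg_left (φ ψ : ℝ × ℝ → ℝ) : B (-φ) ψ = -B φ ψ := by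
  rw [B_eq, B_eq, ← integral_neg]
  congr 1 with p
  simp only [flatDensity, pdU, pdV, Pi.neg_apply, deriv.fun_neg]
  ring

end FlatForm

section Symmetry

variable {φ ψ : ℝ × ℝ → ℝ}

theorem B_comp_of_measurePreserving {e : ℝ × ℝ → ℝ × ℝ} (he : MeasurePreserving e)
    (hemb : MeasurableEmbedding e) (hΩ : e ⁻¹' Ω₀ = Ω₀)
    (hdens : ∀ p, flatDensity (φ ∘ e) (ψ ∘ e) p = flatDensity φ ψ (e p)) :
    B (φ ∘ e) (ψ ∘ e) = B φ ψ := by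
  rw [B_eq, B_eq, ← he.setIntegral_preimage_emb hemb (flatDensity φ ψ), hΩ]
  simp only [hdens]

theorem B_comp_swap (φ ψ : ℝ × ℝ → ℝ) : B (φ ∘ Prod.swap) (ψ ∘ Prod.swap) = B φ ψ := by
  refine B_comp_of_measurePreserving Measure.measurePreserving_swap
    MeasurableEquiv.prodComm.measurableEmbedding (Set.preimage_swap_prod _ _) fun p => ?_
  have hU (f : ℝ × ℝ → ℝ) : pdU (f ∘ Prod.swap) p = pdV f p.swap := rfl
  have hV (f : ℝ × ℝ → ℝ) : pdV (f ∘ Prod.swap) p = pdU f p.swap := rfl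
  simp only [flatDensity, hU, hV, Function.comp_apply, Prod.fst_swap, Prod.snd_swap]
  ring

theorem B_comp_neg_fst (φ ψ : ℝ × ℝ → ℝ) :
    B (φ ∘ Prod.map Neg.neg id) (ψ ∘ Prod.map Neg.neg id) = B φ ψ := by
  refine B_comp_of_measurePreserving
    ((Measure.measurePreserving_neg volume).prod (.id _))
    ((MeasurableEquiv.neg ℝ).prodCongr (.refl ℝ)).measurableEmbedding ?_ fun p => ?_
  · rw [Ω₀, Set.preimage_prod_map_prod, Set.preimage_id, Set.neg_preimage, Set.neg_Ioo, neg_neg]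
  have hU (f : ℝ × ℝ → ℝ) : pdU (f ∘ Prod.map Neg.neg id) p = -pdU f (Prod.map Neg.neg id p) :=
    deriv_comp_neg (fun x => f (x, p.2)) p.1
  have hV (f : ℝ × ℝ → ℝ) : pdV (f ∘ Prod.map Neg.neg id) p = pdV f (Prod.map Neg.neg id p) := rfl
  simp only [flatDensity, hU, hV, Function.comp_apply, Prod.map_fst, Prod.map_snd, id_eq, neg_sq,
    neg_mul_neg]

theorem B_eq_zero_of_odd_of_even (hφ : φ ∘ Prod.map Neg.neg id = -φ)
    (hψ : ψ ∘ Prod.map Neg.neg id = ψ) : B φ ψ = 0 := by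
  have h := B_comp_neg_fst φ ψ
  rw [hφ, hψ, B_neg_left] at h
  linarith

end Symmetry

section Diagonalization

theorem isOpen_Ω₀ : IsOpen Ω₀ := isOpen_Ioo.prod isOpen_Ioo

theorem isCompact_closure_Ω₀ : IsCompact (closure Ω₀) :=
  (Metric.isBounded_Ioo _ _).prod (Metric.isBounded_Ioo _ _) |>.isCompact_closure

variable {E : Type*} [NormedAddCommGroup E]

theorem integrableOn_Ω₀ {f : ℝ × ℝ → E} (hf : Continuous f) : IntegrableOn f Ω₀ :=
  (hf.continuousOn.integrableOn_compact isCompact_closure_Ω₀).mono_set subset_closure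

variable [NormedSpace ℝ E]

theorem pdU_eq_fderiv {f : ℝ × ℝ → E} {p : ℝ × ℝ} (hf : DifferentiableAt ℝ f p) :
    pdU f p = fderiv ℝ f p (1, 0) :=
  (hf.hasFDerivAt.comp_hasDerivAt p.1
    ((hasDerivAt_id p.1).prodMk (hasDerivAt_const p.1 p.2))).deriv

theorem pdV_eq_fderiv {f : ℝ × ℝ → E} {p : ℝ × ℝ} (hf : DifferentiableAt ℝ f p) :
    pdV f p = fderiv ℝ f p (0, 1) :=
  (hf.hasFDerivAt.comp_hasDerivAt p.2
    ((hasDerivAt_const p.2 p.1).prodMk (hasDerivAt_id p.2))).deriv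

theorem continuous_pdU {f : ℝ × ℝ → E} (hf : ContDiff ℝ 1 f) : Continuous (pdU f) :=
  ((hf.continuous_fderiv one_ne_zero).clm_apply continuous_const).congr fun p =>
    (pdU_eq_fderiv (hf.differentiable one_ne_zero p)).symm

theorem continuous_pdV {f : ℝ × ℝ → E} (hf : ContDiff ℝ 1 f) : Continuous (pdV f) :=
  ((hf.continuous_fderiv one_ne_zero).clm_apply continuous_const).congr fun p =>
    (pdV_eq_fderiv (hf.differentiable one_ne_zero p)).symm

theorem continuous_flatDensity {φ ψ : ℝ × ℝ → ℝ} (hφ : ContDiff ℝ 1 φ) (hψ : ContDiff ℝ 1 ψ) :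
    Continuous (flatDensity φ ψ) := by
  refine (((continuous_pdU hφ).mul (continuous_pdU hψ)).add
    ((continuous_pdV hφ).mul (continuous_pdV hψ))).sub
    ((continuous_const.mul (hφ.continuous.mul hψ.continuous)).div (by fun_prop) fun p => ?_)
  positivity

variable {ι : Type*} [Fintype ι] {f : ι → ℝ × ℝ → ℝ}

theorem fderiv_linearCombination {p : ℝ × ℝ} (hf : ∀ i, DifferentiableAt ℝ (f i) p) (c : ι → ℝ) :
    fderiv ℝ (fun q => ∑ i, c i * f i q) p = ∑ i, c i • fderiv ℝ (f i) p :=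
  (HasFDerivAt.fun_sum fun i _ => (hf i).hasFDerivAt.const_mul (c i)).fderiv

theorem flatDensity_linearCombination {p : ℝ × ℝ} (hf : ∀ i, DifferentiableAt ℝ (f i) p)
    (c : ι → ℝ) :
    flatDensity (fun q => ∑ i, c i * f i q) (fun q => ∑ i, c i * f i q) p =
      ∑ i, ∑ j, c i * c j * flatDensity (f i) (f j) p := by
  have hdiff : DifferentiableAt ℝ (fun q => ∑ i, c i * f i q) p := by fun_prop
  simp only [flatDensity, pdU_eq_fderiv hdiff, pdV_eq_fderiv hdiff, fderiv_linearCombination hf,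
    pdU_eq_fderiv (hf _), pdV_eq_fderiv (hf _), sum_apply, smul_apply, smul_eq_mul,
    Finset.sum_mul_sum]
  simp only [Finset.mul_sum, Finset.sum_div, ← Finset.sum_add_distrib, ← Finset.sum_sub_distrib]
  refine Finset.sum_congr rfl fun i _ => Finset.sum_congr rfl fun j _ => ?_
  ring

theorem Q_linearCombination (hf : ∀ i, ContDiff ℝ 1 (f i)) (c : ι → ℝ) :
    Q (fun p => ∑ i, c i * f i p) = ∑ i, ∑ j, c i * c j * B (f i) (f j) := by
  have hint (i j : ι) : IntegrableOn (fun p => c i * c j * flatDensity (f i) (f j) p) Ω₀ :=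
    integrableOn_Ω₀ ((continuous_flatDensity (hf i) (hf j)).const_mul _)
  simp only [Q_eq, B_eq, flatDensity_linearCombination fun i => (hf i).differentiable one_ne_zero _]
  rw [integral_finsetSum _ fun i _ => integrable_finsetSum _ fun j _ => hint i j]
  refine Finset.sum_congr rfl fun i _ => ?_
  rw [integral_finsetSum _ fun j _ => hint i j]
  exact Finset.sum_congr rfl fun j _ => integral_const_mul _ _

theorem Q_linearCombination_of_orthogonal (hf : ∀ i, ContDiff ℝ 1 (f i))
    (horth : Pairwise fun i j => B (f i) (f j) = 0) (c : ι → ℝ) :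
    Q (fun p => ∑ i, c i * f i p) = ∑ i, c i ^ 2 * Q (f i) := by
  rw [Q_linearCombination hf]
  refine Finset.sum_congr rfl fun i _ => ?_
  rw [Finset.sum_eq_single_of_mem i (Finset.mem_univ i), Q_eq_B, sq]
  intro j _ hji
  rw [horth hji.symm, mul_zero]

theorem Q_linearCombination_neg (hf : ∀ i, ContDiff ℝ 1 (f i))
    (horth : Pairwise fun i j => B (f i) (f j) = 0) (hneg : ∀ i, Q (f i) < 0)
    {c : ι → ℝ} (hc : c ≠ 0) : Q (fun p => ∑ i, c i * f i p) < 0 := by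
  obtain ⟨k, hk⟩ := Function.ne_iff.mp hc
  rw [Q_linearCombination_of_orthogonal hf horth]
  exact Finset.sum_neg' (fun i _ => mul_nonpos_of_nonneg_of_nonpos (sq_nonneg _) (hneg i).le)
    ⟨k, Finset.mem_univ k, mul_neg_of_pos_of_neg (sq_pos_of_ne_zero hk) (hneg k)⟩

end Diagonalization

section TestFunctions

theorem contDiff_Φ {n : WithTop ℕ∞} (i : Fin 3) : ContDiff ℝ n (Φ i) := by
  fin_cases i <;> dsimp [Φ] <;> fun_prop

theorem Φ_two_eq_comp_swap : Φ 2 = Φ 1 ∘ Prod.swap := rfl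

theorem Φ_zero_comp_swap : Φ 0 ∘ Prod.swap = Φ 0 := by
  funext p
  change (p.2 * p.1) ^ 2 + 2 = (p.1 * p.2) ^ 2 + 2
  rw [mul_comm]

theorem Φ_zero_comp_neg_fst : Φ 0 ∘ Prod.map Neg.neg id = Φ 0 := by
  funext p
  change (-p.1 * p.2) ^ 2 + 2 = (p.1 * p.2) ^ 2 + 2
  ring

theorem Φ_one_comp_neg_fst : Φ 1 ∘ Prod.map Neg.neg id = -Φ 1 := by
  funext p
  change -p.1 - (-p.1) ^ 5 / 4 = -(p.1 - p.1 ^ 5 / 4)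
  ring

theorem Φ_two_comp_neg_fst : Φ 2 ∘ Prod.map Neg.neg id = Φ 2 := rfl

theorem pairwise_B_Φ_eq_zero : Pairwise fun i j => B (Φ i) (Φ j) = 0 := by
  have h10 : B (Φ 1) (Φ 0) = 0 := B_eq_zero_of_odd_of_even Φ_one_comp_neg_fst Φ_zero_comp_neg_fst
  have h12 : B (Φ 1) (Φ 2) = 0 := B_eq_zero_of_odd_of_even Φ_one_comp_neg_fst Φ_two_comp_neg_fst
  have h20 : B (Φ 2) (Φ 0) = 0 := by
    rw [Φ_two_eq_comp_swap, ← Φ_zero_comp_swap, B_comp_swap, h10]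
  intro i j hij
  fin_cases i <;> fin_cases j
  · exact absurd rfl hij
  · exact (B_comm _ _).trans h10
  · exact (B_comm _ _).trans h20
  · exact h10
  · exact absurd rfl hij
  · exact h12
  · exact h20
  · exact (B_comm _ _).trans h12
  · exact absurd rfl hij

theorem Q_Φ_two : Q (Φ 2) = Q (Φ 1) := by
  rw [Q_eq_B, Q_eq_B, Φ_two_eq_comp_swap, B_comp_swap]

end TestFunctions

section EvenTestFunction

theorem Q_neg_of_flatDensity_neg {φ : ℝ × ℝ → ℝ} (hφ : ContDiff ℝ 1 φ)
    (hneg : ∀ p ∈ Ω₀, flatDensity φ φ p < 0) : Q φ < 0 := by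
  have hpos : 0 < ∫ p in Ω₀, -flatDensity φ φ p := by
    rw [setIntegral_pos_iff_support_of_nonneg_ae
      ((ae_restrict_mem isOpen_Ω₀.measurableSet).mono fun p hp => (neg_pos.2 (hneg p hp)).le)
      (integrableOn_Ω₀ (continuous_flatDensity hφ hφ).neg),
      Set.inter_eq_right.2 fun p hp => Function.mem_support.2 (neg_pos.2 (hneg p hp)).ne']
    exact isOpen_Ω₀.measure_pos _ ⟨0, by simp [Ω₀]⟩
  rw [integral_neg, neg_pos] at hpos
  rwa [Q_eq]

theorem flatDensity_Φ_zero (p : ℝ × ℝ) : flatDensity (Φ 0) (Φ 0) p =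
    4 * ((p.1 * p.2) ^ 2 * (p.1 ^ 2 + p.2 ^ 2))
      - 8 * ((p.1 * p.2) ^ 2 + 2) ^ 2 / (1 + p.1 ^ 2 + p.2 ^ 2) ^ 2 := by
  have hU : pdU (Φ 0) p = 2 * p.1 * p.2 ^ 2 := by
    refine ((((hasDerivAt_id' p.1).mul_const p.2).fun_pow 2).add_const 2).deriv.trans ?_
    ring
  have hV : pdV (Φ 0) p = 2 * p.2 * p.1 ^ 2 := by
    refine ((((hasDerivAt_id' p.2).const_mul p.1).fun_pow 2).add_const 2).deriv.trans ?_
    ring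
  have h0 : Φ 0 p = (p.1 * p.2) ^ 2 + 2 := rfl
  rw [flatDensity, hU, hV, h0]
  ring

theorem flatDensity_Φ_zero_neg {p : ℝ × ℝ} (hp : p ∈ Ω₀) : flatDensity (Φ 0) (Φ 0) p < 0 := by
  have hu : p.1 ^ 2 < 1 := by rw [sq_lt_one_iff_abs_lt_one, abs_lt]; exact hp.1
  have hv : p.2 ^ 2 < 1 := by rw [sq_lt_one_iff_abs_lt_one, abs_lt]; exact hp.2
  rw [flatDensity_Φ_zero, mul_pow]
  have hr : p.1 ^ 2 + p.2 ^ 2 < 1 + p.1 ^ 2 * p.2 ^ 2 := by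
    linarith [mul_pos (sub_pos.2 hu) (sub_pos.2 hv)]
  have hdirichlet : p.1 ^ 2 * p.2 ^ 2 * (p.1 ^ 2 + p.2 ^ 2) < 2 := by
    nlinarith [mul_nonneg (sq_nonneg p.1) (sq_nonneg p.2)]
  have harea : 1 < (p.1 ^ 2 * p.2 ^ 2 + 2) ^ 2 / (1 + p.1 ^ 2 + p.2 ^ 2) ^ 2 := by
    rw [← div_pow]
    refine one_lt_pow₀ ((one_lt_div (by positivity)).2 ?_) two_ne_zero
    linarith
  rw [mul_div_assoc]
  linarith

theorem Q_Φ_zero_neg : Q (Φ 0) < 0 :=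
  Q_neg_of_flatDensity_neg (contDiff_Φ 0) fun _ => flatDensity_Φ_zero_neg

end EvenTestFunction

section OddTestFunctions

/-- The cubic Hermite interpolant of `1 / (1 + s)²` at the double nodes `1/2` and `3/2`. -/
def hermiteMinorant (s : ℝ) : ℝ := 8 * (369 - 492 * s + 290 * s ^ 2 - 64 * s ^ 3) / 3375

theorem hermiteMinorant_le {s : ℝ} (hs : 0 ≤ s) : hermiteMinorant s ≤ 1 / (1 + s) ^ 2 := by
  have hgap : 1 - hermiteMinorant s * (1 + s) ^ 2 =
      (2 * s - 1) ^ 2 * (2 * s - 3) ^ 2 * (32 * s + 47) / 3375 := by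
    unfold hermiteMinorant
    ring
  rw [le_div_iff₀ (by positivity), ← sub_nonneg, hgap]
  positivity

theorem flatDensity_comp_fst (a : ℝ → ℝ) (p : ℝ × ℝ) :
    flatDensity (fun q => a q.1) (fun q => a q.1) p =
      deriv a p.1 ^ 2 - 8 * a p.1 ^ 2 / (1 + p.1 ^ 2 + p.2 ^ 2) ^ 2 := by
  simp only [flatDensity, pdU, pdV, deriv_const]
  ring

theorem Q_comp_fst_le {a : ℝ → ℝ} (ha : ContDiff ℝ 1 a) :
    Q (fun p => a p.1) ≤ (∫ p in Ω₀, deriv a p.1 ^ 2)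
      - 8 * ∫ p in Ω₀, a p.1 ^ 2 * hermiteMinorant (p.1 ^ 2 + p.2 ^ 2) := by
  have := ha.continuous_deriv_one
  have := ha.continuous
  have hdir : Continuous fun p : ℝ × ℝ => deriv a p.1 ^ 2 := by fun_prop
  have harea : Continuous fun p : ℝ × ℝ =>
      8 * (a p.1 ^ 2 * hermiteMinorant (p.1 ^ 2 + p.2 ^ 2)) := by
    unfold hermiteMinorant
    fun_prop
  rw [Q_eq, ← integral_const_mul,
    ← integral_sub (integrableOn_Ω₀ hdir) (integrableOn_Ω₀ harea)]
  have hφ : ContDiff ℝ 1 fun p : ℝ × ℝ => a p.1 := ha.comp contDiff_fst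
  refine setIntegral_mono (integrableOn_Ω₀ (continuous_flatDensity hφ hφ))
    (integrableOn_Ω₀ (hdir.sub harea)) fun p => ?_
  rw [flatDensity_comp_fst, mul_div_assoc, div_eq_mul_one_div (a p.1 ^ 2), add_assoc]
  gcongr
  exact hermiteMinorant_le (by positivity)

theorem integral_Ioo_pow_even (k : ℕ) :
    ∫ x in Set.Ioo (-1 : ℝ) 1, x ^ (2 * k) = 2 / (2 * k + 1) := by
  rw [← integral_Ioc_eq_integral_Ioo, ← intervalIntegral.integral_of_le (by norm_num),
    integral_pow, one_pow, Odd.neg_one_pow (by simp)]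
  push_cast
  ring

theorem integral_Ioo_even_trinomial (a b c : ℝ) (i j k : ℕ) :
    ∫ x in Set.Ioo (-1 : ℝ) 1, (a * x ^ (2 * i) + b * x ^ (2 * j) + c * x ^ (2 * k)) =
      a * (2 / (2 * i + 1)) + b * (2 / (2 * j + 1)) + c * (2 / (2 * k + 1)) := by
  have hint {f : ℝ → ℝ} (hf : Continuous f) : IntegrableOn f (Set.Ioo (-1) 1) :=
    hf.integrableOn_Icc.mono_set Set.Ioo_subset_Icc_self
  rw [integral_add (hint (by fun_prop)) (hint (by fun_prop)),
    integral_add (hint (by fun_prop)) (hint (by fun_prop))]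
  simp only [integral_const_mul, integral_Ioo_pow_even]

theorem integral_Ω₀_mul (f g : ℝ → ℝ) : ∫ p in Ω₀, f p.1 * g p.2 =
    (∫ u in Set.Ioo (-1 : ℝ) 1, f u) * ∫ v in Set.Ioo (-1 : ℝ) 1, g v :=
  setIntegral_prod_mul f g _ _

theorem integral_Ω₀_mul_pow_normSq {f : ℝ → ℝ} (hf : Continuous f) (k : ℕ) :
    ∫ p in Ω₀, f p.1 * (p.1 ^ 2 + p.2 ^ 2) ^ k = ∑ m ∈ Finset.range (k + 1),
      k.choose m * (∫ u in Set.Ioo (-1 : ℝ) 1, f u * u ^ (2 * m)) *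
        (2 / (2 * (k - m : ℕ) + 1)) := by
  have hexpand (p : ℝ × ℝ) : f p.1 * (p.1 ^ 2 + p.2 ^ 2) ^ k = ∑ m ∈ Finset.range (k + 1),
      k.choose m * (f p.1 * p.1 ^ (2 * m) * p.2 ^ (2 * (k - m))) := by
    rw [add_pow, Finset.mul_sum]
    refine Finset.sum_congr rfl fun m _ => ?_
    rw [pow_mul, pow_mul]
    ring
  simp only [hexpand]
  rw [integral_finsetSum _ fun m _ => integrableOn_Ω₀ (by fun_prop)]
  refine Finset.sum_congr rfl fun m _ => ?_
  rw [integral_const_mul, mul_assoc, ← integral_Ioo_pow_even, ← integral_Ω₀_mul]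

theorem integral_Ω₀_mul_hermiteMinorant {f : ℝ → ℝ} (hf : Continuous f) :
    ∫ p in Ω₀, f p.1 * hermiteMinorant (p.1 ^ 2 + p.2 ^ 2) =
      8 / 3375 * (369 * (∫ p in Ω₀, f p.1 * (p.1 ^ 2 + p.2 ^ 2) ^ 0)
        - 492 * (∫ p in Ω₀, f p.1 * (p.1 ^ 2 + p.2 ^ 2) ^ 1)
        + 290 * (∫ p in Ω₀, f p.1 * (p.1 ^ 2 + p.2 ^ 2) ^ 2)
        - 64 * ∫ p in Ω₀, f p.1 * (p.1 ^ 2 + p.2 ^ 2) ^ 3) := by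
  calc ∫ p in Ω₀, f p.1 * hermiteMinorant (p.1 ^ 2 + p.2 ^ 2)
      = ∫ p in Ω₀, 8 / 3375 * (369 * (f p.1 * (p.1 ^ 2 + p.2 ^ 2) ^ 0)
          - 492 * (f p.1 * (p.1 ^ 2 + p.2 ^ 2) ^ 1) + 290 * (f p.1 * (p.1 ^ 2 + p.2 ^ 2) ^ 2)
          - 64 * (f p.1 * (p.1 ^ 2 + p.2 ^ 2) ^ 3)) := by
        congr 1 with p
        unfold hermiteMinorant
        ring
    _ = _ := by
        rw [integral_const_mul, integral_sub (integrableOn_Ω₀ (by fun_prop))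
          (integrableOn_Ω₀ (by fun_prop)), integral_add (integrableOn_Ω₀ (by fun_prop))
          (integrableOn_Ω₀ (by fun_prop)), integral_sub (integrableOn_Ω₀ (by fun_prop))
          (integrableOn_Ω₀ (by fun_prop))]
        simp only [integral_const_mul]

/-- The profile `a` of the odd test functions `φ² = a(u)` and `φ³ = a(v)`. -/
def profile (u : ℝ) : ℝ := u - u ^ 5 / 4

theorem contDiff_profile : ContDiff ℝ 1 profile := by
  unfold profile
  fun_prop

theorem deriv_profile (u : ℝ) : deriv profile u = 1 - 5 / 4 * u ^ 4 := by
  refine ((hasDerivAt_id' u).fun_sub ((hasDerivAt_pow 5 u).div_const 4)).deriv.trans ?_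
  norm_num
  ring

theorem integral_Ioo_profile_sq_mul_pow_even (k : ℕ) :
    ∫ u in Set.Ioo (-1 : ℝ) 1, profile u ^ 2 * u ^ (2 * k) =
      2 / (2 * k + 3) - 1 / (2 * k + 7) + 1 / (8 * (2 * k + 11)) := by
  have hexpand (u : ℝ) : profile u ^ 2 * u ^ (2 * k) =
      1 * u ^ (2 * (k + 1)) + -1 / 2 * u ^ (2 * (k + 3)) + 1 / 16 * u ^ (2 * (k + 5)) := by
    unfold profile
    ring
  simp only [hexpand, integral_Ioo_even_trinomial]
  push_cast
  field_simp
  ring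

theorem integral_Ω₀_deriv_profile_sq : ∫ p in Ω₀, deriv profile p.1 ^ 2 = 97 / 36 := by
  have hexpand (u : ℝ) : deriv profile u ^ 2 =
      1 * u ^ (2 * 0) + -5 / 2 * u ^ (2 * 2) + 25 / 16 * u ^ (2 * 4) := by
    rw [deriv_profile]
    ring
  have hfubini := integral_Ω₀_mul (fun u => deriv profile u ^ 2) fun _ => 1
  simp only [mul_one] at hfubini
  rw [hfubini]
  simp only [hexpand, integral_Ioo_even_trinomial]
  norm_num

-- The margin is narrow: the right-hand side is about `2.7072`, against `97 / 36 ≈ 2.6944`.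
theorem lt_integral_Ω₀_profile_sq_mul_hermiteMinorant :
    97 / 36 < 8 * ∫ p in Ω₀, profile p.1 ^ 2 * hermiteMinorant (p.1 ^ 2 + p.2 ^ 2) := by
  have hcont : Continuous fun u => profile u ^ 2 := contDiff_profile.continuous.pow 2
  rw [integral_Ω₀_mul_hermiteMinorant hcont]
  simp only [integral_Ω₀_mul_pow_normSq hcont, integral_Ioo_profile_sq_mul_pow_even,
    Finset.sum_range_succ, Finset.sum_range_zero]
  norm_num [Nat.choose]

theorem Φ_one_eq_profile : Φ 1 = fun p => profile p.1 := rfl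

theorem Q_Φ_one_neg : Q (Φ 1) < 0 := by
  have hle := Q_comp_fst_le contDiff_profile
  rw [integral_Ω₀_deriv_profile_sq] at hle
  rw [Φ_one_eq_profile]
  linarith [lt_integral_Ω₀_profile_sq_mul_hermiteMinorant]

theorem Q_Φ_neg (i : Fin 3) : Q (Φ i) < 0 := by
  fin_cases i
  · exact Q_Φ_zero_neg
  · exact Q_Φ_one_neg
  · exact Q_Φ_two.trans_lt Q_Φ_one_neg

end OddTestFunctions

section Index

theorem memF_of_contDiff {f : ℝ × ℝ → ℝ} (hf : ContDiff ℝ (⊤ : ℕ∞) f) : memF f := by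
  refine ⟨hf.contDiffOn, fun i _ => ?_⟩
  have hcont : Continuous (iteratedFDeriv ℝ i f) :=
    hf.continuous_iteratedFDeriv (by exact_mod_cast le_top)
  obtain ⟨C, hC⟩ := isCompact_closure_Ω₀.exists_bound_of_continuousOn hcont.continuousOn
  refine ⟨C, fun p hp => ?_⟩
  rw [iteratedFDerivWithin_of_isOpen i isOpen_Ω₀ hp]
  exact hC p (subset_closure hp)

/-- The space `F(Ω₀)` of smooth functions on `Ω₀` with bounded partial derivatives of order `≤ 2`,
as a subspace of all functions on the plane. -/
def boundedC2 : Submodule ℝ (ℝ × ℝ → ℝ) where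
  carrier := {f | memF f}
  zero_mem' := memF_of_contDiff contDiff_const
  add_mem' := by
    rintro f g ⟨hf, hfb⟩ ⟨hg, hgb⟩
    refine ⟨hf.add hg, fun i hi => ?_⟩
    obtain ⟨C, hC⟩ := hfb i hi
    obtain ⟨D, hD⟩ := hgb i hi
    refine ⟨C + D, fun p hp => ?_⟩
    have hi' : (i : WithTop ℕ∞) ≤ (⊤ : ℕ∞) := by exact_mod_cast le_top
    rw [iteratedFDerivWithin_add_apply ((hf p hp).of_le hi') ((hg p hp).of_le hi')
      isOpen_Ω₀.uniqueDiffOn hp]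
    exact norm_add_le_of_le (hC p hp) (hD p hp)
  smul_mem' := by
    rintro c f ⟨hf, hfb⟩
    refine ⟨hf.const_smul c, fun i hi => ?_⟩
    obtain ⟨C, hC⟩ := hfb i hi
    refine ⟨‖c‖ * C, fun p hp => ?_⟩
    have hi' : (i : WithTop ℕ∞) ≤ (⊤ : ℕ∞) := by exact_mod_cast le_top
    rw [iteratedFDerivWithin_const_smul_apply ((hf p hp).of_le hi') isOpen_Ω₀.uniqueDiffOn hp,
      norm_smul]
    exact mul_le_mul_of_nonneg_left (hC p hp) (norm_nonneg c)

variable {ι : Type*} [Fintype ι] {f : ι → ℝ × ℝ → ℝ}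

theorem linearIndependent_of_Q_neg
    (hneg : ∀ c : ι → ℝ, c ≠ 0 → Q (fun p => ∑ i, c i * f i p) < 0) : LinearIndependent ℝ f := by
  rw [Fintype.linearIndependent_iff]
  intro c hc
  by_contra! hne
  obtain ⟨i, hi⟩ := hne
  have hzero : (fun p => ∑ i, c i * f i p) = 0 := by
    funext p
    simpa using congrFun hc p
  have hlt := hneg c (Function.ne_iff.2 ⟨i, hi⟩)
  rw [hzero, Q_zero] at hlt
  exact lt_irrefl 0 hlt

theorem card_le_indbScherk (hf : ∀ i, memF (f i))
    (hneg : ∀ c : ι → ℝ, c ≠ 0 → Q (fun p => ∑ i, c i * f i p) < 0) :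
    (Fintype.card ι : ℕ∞) ≤ indbScherk := by
  refine le_sSup ⟨Submodule.span ℝ (Set.range f), .span_of_finite ℝ (Set.finite_range f),
    fun g hg => ?_, fun g hg hg0 => ?_, ?_⟩
  · exact (Submodule.span_le (p := boundedC2)).2 (Set.range_subset_iff.2 hf) hg
  · obtain ⟨c, rfl⟩ := (Submodule.mem_span_range_iff_exists_fun ℝ).1 hg
    have hc : c ≠ 0 := by
      rintro rfl
      simp at hg0
    convert hneg c hc using 2
    funext p
    simp
  · rw [finrank_span_eq_card (linearIndependent_of_Q_neg hneg)]

end Index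

/-- every nontrivial linear combination of `φ¹, φ², φ³` has negative
second variation; consequently (the functions being linearly independent members of
`F(Ω₀)`) the modified index of the fundamental Scherk surface is at least 3. -/
theorem scherk_negative_on_span_and_indb_ge_three :
    (∀ c : Fin 3 → ℝ, c ≠ 0 → Q (fun p => ∑ i, c i * Φ i p) < 0) ∧
    LinearIndependent ℝ Φ ∧ (∀ i, memF (Φ i)) ∧ 3 ≤ indbScherk := by
  have hneg (c : Fin 3 → ℝ) (hc : c ≠ 0) : Q (fun p => ∑ i, c i * Φ i p) < 0 :=
    Q_linearCombination_neg contDiff_Φ pairwise_B_Φ_eq_zero Q_Φ_neg hc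
  have hmem (i : Fin 3) : memF (Φ i) := memF_of_contDiff (contDiff_Φ i)
  exact ⟨hneg, linearIndependent_of_Q_neg hneg, hmem, card_le_indbScherk hmem hneg⟩
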